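/- arXiv:2007.02607 — 3 statements merged into one kernel-verified Lean document; each statement's English description precedes it below -/
import Mathlib

section
/- Let u, B : ℝ³ → ℝ³ be smooth vector fields with div u = 0 and div B = 0 on ℝ³, such that u satisfies the Navier-slip boundary condition (u₃ = ∂₃u₁ = ∂₃u₂ = 0 at every point of ∂Ω) and B satisfies the insulating boundary condition (B₁ = B₂ = 0 at every point of ∂Ω). Then curl(B × u) × n = ((u·∇)B − (B·∇)u) × n = 0 on ∂Ω; that is, the first and second components of (u·∇)B − (B·∇)u (which equals curl(B × u) since div u = div B = 0) vanish at every point of ∂Ω. -/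
noncomputable section

open MeasureTheory

/-- Points/vectors in ℝ³, indexed by `Fin 3` (so index `0,1,2` stand for coordinates `1,2,3`). -/
abbrev V3 : Type := Fin 3 → ℝ

/-- Partial derivative in the `i`-th coordinate direction. -/
def pd (i : Fin 3) (f : V3 → ℝ) (x : V3) : ℝ := fderiv ℝ f x (Pi.single i 1)

/-- Divergence of a vector field. -/
def vdiv (u : V3 → V3) (x : V3) : ℝ :=
  pd 0 (fun y => u y 0) x + pd 1 (fun y => u y 1) x + pd 2 (fun y => u y 2) x

/-- Curl of a vector field. -/
def vcurl (u : V3 → V3) (x : V3) : V3 :=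
  ![pd 1 (fun y => u y 2) x - pd 2 (fun y => u y 1) x,
    pd 2 (fun y => u y 0) x - pd 0 (fun y => u y 2) x,
    pd 0 (fun y => u y 1) x - pd 1 (fun y => u y 0) x]

/-- Laplacian of a scalar function. -/
def lap (f : V3 → ℝ) (x : V3) : ℝ :=
  pd 0 (pd 0 f) x + pd 1 (pd 1 f) x + pd 2 (pd 2 f) x

/-- Componentwise Laplacian of a vector field. -/
def vlap (u : V3 → V3) (x : V3) : V3 := fun i => lap (fun y => u y i) x

/-- Advective derivative `(u·∇)V`. -/
def adv (u V : V3 → V3) (x : V3) : V3 := fun i =>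
  u x 0 * pd 0 (fun y => V y i) x + u x 1 * pd 1 (fun y => V y i) x +
    u x 2 * pd 2 (fun y => V y i) x

/-- Cross product in ℝ³. -/
def cross (a b : V3) : V3 :=
  ![a 1 * b 2 - a 2 * b 1, a 2 * b 0 - a 0 * b 2, a 0 * b 1 - a 1 * b 0]

/-- Dot product in ℝ³. -/
def dot (a b : V3) : ℝ := a 0 * b 0 + a 1 * b 1 + a 2 * b 2

/-- Gradient of a scalar function. -/
def grad (f : V3 → ℝ) (x : V3) : V3 := fun i => pd i f x

/-- The boundary `∂Ω = {x : x₃ = 0 or x₃ = 1}`. -/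
def onBdry (x : V3) : Prop := x 2 = 0 ∨ x 2 = 1

/-- Horizontal periodicity (period 1 in x₁ and x₂) of a scalar function. -/
def hperS (f : V3 → ℝ) : Prop :=
  (∀ x, f (x + Pi.single 0 1) = f x) ∧ (∀ x, f (x + Pi.single 1 1) = f x)

/-- Horizontal periodicity (period 1 in x₁ and x₂) of a vector field. -/
def hperV (u : V3 → V3) : Prop :=
  (∀ x, u (x + Pi.single 0 1) = u x) ∧ (∀ x, u (x + Pi.single 1 1) = u x)

/-- The unit cube `Q = [0,1]³`. -/
def Q3 : Set V3 := Set.Icc 0 1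

/-!
`(u·∇)B − (B·∇)u` is the Lie bracket `[u, B]`, with `i`-th component `D(Bᵢ)(u) − D(uᵢ)(B)`. Let `i`
be tangential and `x ∈ ∂Ω`. Since `u(x)` is tangent to `∂Ω`, where `Bᵢ` vanishes identically, the
first term is zero at `x`. Since `B(x)` is normal to `∂Ω`, the second is `B₃ ∂₃uᵢ`, which is zero by
the Navier-slip condition.
-/

open Filter Topology VectorField

section LineDerivative

variable {𝕜 E F : Type*} [NontriviallyNormedField 𝕜]
  [NormedAddCommGroup E] [NormedSpace 𝕜 E] [NormedAddCommGroup F] [NormedSpace 𝕜 F]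

lemma fderiv_apply_eq_zero_of_eventually_const {f : E → F} {x v : E} {c : F}
    (hf : DifferentiableAt 𝕜 f x) (hc : ∀ᶠ t in 𝓝 (0 : 𝕜), f (x + t • v) = c) :
    fderiv 𝕜 f x v = 0 := by
  have hline : (fun t : 𝕜 => f (x + t • v)) =ᶠ[𝓝 0] fun _ => c := hc
  rw [← hf.lineDeriv_eq_fderiv, lineDeriv, hline.deriv_eq, deriv_const]

lemma map_lieBracket_eq_zero (π : E →L[𝕜] F) {V W : E → E} {x : E}
    (hW : DifferentiableAt 𝕜 W x) (hπW : ∀ᶠ t in 𝓝 (0 : 𝕜), π (W (x + t • V x)) = 0)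
    (hπV : π (fderiv 𝕜 V x (W x)) = 0) :
    π (lieBracket 𝕜 V W x) = 0 := by
  have hcomp : fderiv 𝕜 (π ∘ W) x (V x) = π (fderiv 𝕜 W x (V x)) := by
    rw [(π.hasFDerivAt.comp x hW.hasFDerivAt).fderiv, ContinuousLinearMap.comp_apply]
  have hπDW : π (fderiv 𝕜 W x (V x)) = 0 :=
    hcomp ▸ fderiv_apply_eq_zero_of_eventually_const (π.differentiableAt.comp x hW) hπW
  rw [lieBracket, map_sub, hπDW, hπV, sub_zero]

end LineDerivative

section Boundary

variable {u V B : V3 → V3} {x : V3}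

lemma fderiv_apply_eq_sum_mul_pd (f : V3 → ℝ) (x v : V3) :
    fderiv ℝ f x v = ∑ k, v k * pd k f x := by
  conv_lhs => rw [pi_eq_sum_univ' v]
  simp only [map_sum, map_smul, smul_eq_mul, pd]

lemma adv_eq_fderiv_apply (u : V3 → V3) (hV : DifferentiableAt ℝ V x) :
    adv u V x = fderiv ℝ V x (u x) := by
  ext i
  calc
    adv u V x i = fderiv ℝ (fun y => V y i) x (u x) := by
      rw [fderiv_apply_eq_sum_mul_pd, Fin.sum_univ_three, adv]
    _ = fderiv ℝ V x (u x) i := by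
      rw [fderiv_apply hV, ContinuousLinearMap.comp_apply, ContinuousLinearMap.proj_apply]

lemma adv_sub_adv_eq_lieBracket (hu : DifferentiableAt ℝ u x) (hB : DifferentiableAt ℝ B x) :
    adv u B x - adv B u x = lieBracket ℝ u B x := by
  rw [adv_eq_fderiv_apply u hB, adv_eq_fderiv_apply B hu, lieBracket]

lemma onBdry.add_smul (hx : onBdry x) {v : V3} (hv : v 2 = 0) (t : ℝ) : onBdry (x + t • v) := by
  simpa [onBdry, hv] using hx

lemma adv_sub_adv_apply_eq_zero_of_onBdry {i : Fin 3} (hx : onBdry x)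
    (hu : DifferentiableAt ℝ u x) (hB : DifferentiableAt ℝ B x)
    (hu_normal : u x 2 = 0) (hu_slip : pd 2 (fun y => u y i) x = 0)
    (hB_normal : B x 0 = 0 ∧ B x 1 = 0) (hBi : ∀ y, onBdry y → B y i = 0) :
    (adv u B x - adv B u x) i = 0 := by
  have hBi_line : ∀ᶠ t in 𝓝 (0 : ℝ), B (x + t • u x) i = 0 :=
    .of_forall fun t => hBi _ (hx.add_smul hu_normal t)
  have hDu : fderiv ℝ u x (B x) i = 0 := by
    simp [← adv_eq_fderiv_apply B hu, adv, hB_normal, hu_slip]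
  rw [adv_sub_adv_eq_lieBracket hu hB]
  exact map_lieBracket_eq_zero (.proj i : V3 →L[ℝ] ℝ) hB hBi_line hDu

theorem stmt_0_general (hx : onBdry x)
    (hu : DifferentiableAt ℝ u x) (hB : DifferentiableAt ℝ B x)
    (hubc : u x 2 = 0 ∧ pd 2 (fun y => u y 0) x = 0 ∧ pd 2 (fun y => u y 1) x = 0)
    (hBbc : ∀ y, onBdry y → B y 0 = 0 ∧ B y 1 = 0) :
    (adv u B x - adv B u x) 0 = 0 ∧ (adv u B x - adv B u x) 1 = 0 := by
  obtain ⟨hu_normal, hu_slip₀, hu_slip₁⟩ := hubc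
  exact ⟨adv_sub_adv_apply_eq_zero_of_onBdry hx hu hB hu_normal hu_slip₀ (hBbc x hx)
      fun y hy => (hBbc y hy).1,
    adv_sub_adv_apply_eq_zero_of_onBdry hx hu hB hu_normal hu_slip₁ (hBbc x hx)
      fun y hy => (hBbc y hy).2⟩

end Boundary

/-- Lemma 5.1, first part: for divergence-free `u` (Navier-slip b.c.) and `B`
(insulating b.c.), `curl(B × u) × n = ((u·∇)B − (B·∇)u) × n = 0` on `∂Ω`. -/
theorem stmt_0 (u B : V3 → V3)
    (hu : ContDiff ℝ (⊤ : ℕ∞) u) (hB : ContDiff ℝ (⊤ : ℕ∞) B)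
    (hdivu : ∀ x, vdiv u x = 0) (hdivB : ∀ x, vdiv B x = 0)
    (hubc : ∀ x, onBdry x →
      u x 2 = 0 ∧ pd 2 (fun y => u y 0) x = 0 ∧ pd 2 (fun y => u y 1) x = 0)
    (hBbc : ∀ x, onBdry x → B x 0 = 0 ∧ B x 1 = 0) :
    ∀ x, onBdry x →
      (adv u B x - adv B u x) 0 = 0 ∧ (adv u B x - adv B u x) 1 = 0 :=
  fun x hx => stmt_0_general hx (hu.differentiable (by simp) x) (hB.differentiable (by simp) x)
    (hubc x hx) hBbc
end
end

section
/- Let u : ℝ³ → ℝ³ be a smooth vector field with div u = 0 on ℝ³ satisfying the Navier-slip boundary condition (u₃ = ∂₃u₁ = ∂₃u₂ = 0 at every point of ∂Ω), and set ω = curl u. Then curl(ω × u) × n = ((u·∇)ω − (ω·∇)u) × n = 0 on ∂Ω; that is, the first and second components of (u·∇)ω − (ω·∇)u vanish at every point of ∂Ω. -/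
noncomputable section

open MeasureTheory

/-!
On a horizontal plane where `u` satisfies the Navier-slip condition, `u` is tangential. The
tangential derivatives of `u₃` vanish there, and so do the normal derivatives of `u₁, u₂`, so
`ω = curl u` is normal to the plane. For a tangential index `i`, `(u·∇)ωᵢ` is then a tangential
derivative of a function vanishing on the plane, while `(ω·∇)uᵢ` is a multiple of `∂₃uᵢ = 0`.
-/

/-- The Navier-slip condition at the point `x`, for a boundary with normal direction `e₃`:
`u₃ = ∂₃u₁ = ∂₃u₂ = 0`. -/
structure NavierSlipAt (u : V3 → V3) (x : V3) : Prop where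
  normal_eq_zero : u x 2 = 0
  shear_eq_zero : ∀ i ≠ 2, pd 2 (fun y => u y i) x = 0

lemma navierSlipAt_iff {u : V3 → V3} {x : V3} :
    NavierSlipAt u x ↔
      u x 2 = 0 ∧ pd 2 (fun y => u y 0) x = 0 ∧ pd 2 (fun y => u y 1) x = 0 := by
  constructor
  · rintro ⟨normal, shear⟩
    exact ⟨normal, shear 0 (by decide), shear 1 (by decide)⟩
  · rintro ⟨normal, shear₀, shear₁⟩
    refine ⟨normal, fun i hi => ?_⟩
    fin_cases i
    exacts [shear₀, shear₁, absurd rfl hi]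

section Regularity

variable {n : WithTop ℕ∞}

lemma contDiff_pd {f : V3 → ℝ} (hf : ContDiff ℝ (n + 1) f) (i : Fin 3) :
    ContDiff ℝ n (pd i f) :=
  (hf.fderiv_right le_rfl).clm_apply contDiff_const

lemma contDiff_vcurl {u : V3 → V3} (hu : ContDiff ℝ (n + 1) u) : ContDiff ℝ n (vcurl u) := by
  have hpd (i j : Fin 3) : ContDiff ℝ n (pd i fun y => u y j) :=
    contDiff_pd (contDiff_pi.mp hu j) i
  refine contDiff_pi.mpr fun i => ?_
  fin_cases i
  · exact (hpd 1 2).sub (hpd 2 1)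
  · exact (hpd 2 0).sub (hpd 0 2)
  · exact (hpd 0 1).sub (hpd 1 0)

end Regularity

lemma fderiv_apply_eq_zero_of_forall_line {𝕜 E F : Type*} [NontriviallyNormedField 𝕜]
    [NormedAddCommGroup E] [NormedSpace 𝕜 E] [NormedAddCommGroup F] [NormedSpace 𝕜 F]
    {f : E → F} {x v : E} (hf : DifferentiableAt 𝕜 f x) (hline : ∀ t : 𝕜, f (x + t • v) = 0) :
    fderiv 𝕜 f x v = 0 := by
  simp only [← hf.lineDeriv_eq_fderiv, lineDeriv, hline, deriv_const]

lemma pd_eq_zero_of_forall_plane {f : V3 → ℝ} {i k : Fin 3} {c : ℝ} {x : V3}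
    (hf : DifferentiableAt ℝ f x) (hplane : ∀ y, y k = c → f y = 0) (hx : x k = c)
    (hik : i ≠ k) : pd i f x = 0 :=
  fderiv_apply_eq_zero_of_forall_line hf fun t => hplane _ <| by simp [hx, hik.symm]

lemma adv_apply_eq_zero {u V : V3 → V3} {x : V3} {i : Fin 3}
    (h : ∀ k, u x k = 0 ∨ pd k (fun y => V y i) x = 0) : adv u V x i = 0 := by
  simp only [adv, mul_eq_zero.mpr (h _), add_zero]

section HorizontalPlane

variable {u : V3 → V3} {c : ℝ}

lemma vcurl_apply_eq_zero_of_forall_navierSlipAt {x : V3} (hu : DifferentiableAt ℝ u x)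
    (hslip : ∀ y, y 2 = c → NavierSlipAt u y) (hx : x 2 = c) {i : Fin 3} (hi : i ≠ 2) :
    vcurl u x i = 0 := by
  have tangential_pd (k : Fin 3) (hk : k ≠ 2) : pd k (fun y => u y 2) x = 0 :=
    pd_eq_zero_of_forall_plane (differentiableAt_pi.mp hu 2)
      (fun y hy => (hslip y hy).normal_eq_zero) hx hk
  have normal_pd := (hslip x hx).shear_eq_zero
  fin_cases i
  · simp [vcurl, tangential_pd 1 (by decide), normal_pd 1 (by decide)]
  · simp [vcurl, tangential_pd 0 (by decide), normal_pd 0 (by decide)]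
  · exact absurd rfl hi

theorem stmt_1_general (hu : ContDiff ℝ 2 u) (hslip : ∀ x, x 2 = c → NavierSlipAt u x)
    {x : V3} (hx : x 2 = c) {i : Fin 3} (hi : i ≠ 2) :
    (adv u (vcurl u) x - adv (vcurl u) u x) i = 0 := by
  have vcurl_normal {y : V3} (hy : y 2 = c) {k : Fin 3} (hk : k ≠ 2) : vcurl u y k = 0 :=
    vcurl_apply_eq_zero_of_forall_navierSlipAt (hu.differentiable two_ne_zero y) hslip hy hk
  have vcurl_diff : DifferentiableAt ℝ (fun y => vcurl u y i) x :=
    differentiableAt_pi.mp ((contDiff_vcurl (n := 1) hu).differentiable one_ne_zero x) i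
  have adv_vcurl : adv u (vcurl u) x i = 0 := adv_apply_eq_zero fun k => by
    obtain rfl | hk := eq_or_ne k 2
    · exact .inl (hslip x hx).normal_eq_zero
    · exact .inr (pd_eq_zero_of_forall_plane vcurl_diff (fun y hy => vcurl_normal hy hi) hx hk)
  have vcurl_adv : adv (vcurl u) u x i = 0 := adv_apply_eq_zero fun k => by
    obtain rfl | hk := eq_or_ne k 2
    · exact .inr ((hslip x hx).shear_eq_zero i hi)
    · exact .inl (vcurl_normal hx hk)
  rw [Pi.sub_apply, adv_vcurl, vcurl_adv, sub_zero]

end HorizontalPlane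

/-- Lemma 5.1, second part: for divergence-free `u` with the Navier-slip b.c. and
`ω = curl u`, one has `curl(ω × u) × n = ((u·∇)ω − (ω·∇)u) × n = 0` on `∂Ω`. -/
theorem stmt_1 (u : V3 → V3)
    (hu : ContDiff ℝ (⊤ : ℕ∞) u)
    (hdivu : ∀ x, vdiv u x = 0)
    (hubc : ∀ x, onBdry x →
      u x 2 = 0 ∧ pd 2 (fun y => u y 0) x = 0 ∧ pd 2 (fun y => u y 1) x = 0) :
    ∀ x, onBdry x →
      (adv u (vcurl u) x - adv (vcurl u) u x) 0 = 0 ∧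
      (adv u (vcurl u) x - adv (vcurl u) u x) 1 = 0 := by
  intro x hx
  have tangential (i : Fin 3) (hi : i ≠ 2) := stmt_1_general (contDiff_infty.mp hu 2)
    (fun y hy => navierSlipAt_iff.mpr (hubc y (by rwa [onBdry, hy]))) (Eq.refl (x 2)) hi
  exact ⟨tangential 0 (by decide), tangential 1 (by decide)⟩
end
end

section
/- Let B : ℝ³ → ℝ³ be a smooth vector field with div B = 0 on ℝ³, satisfying the insulating boundary condition (B₁ = B₂ = 0 at every point of ∂Ω) and in addition ΔB × n = 0 on ∂Ω (i.e. (ΔB)₁ = (ΔB)₂ = 0 at every point of ∂Ω). Set ω_B = curl B. Then curl(ω_B × B) × n = ((B·∇)ω_B − (ω_B·∇)B) × n = 0 on ∂Ω; that is, the first and second components of (B·∇)(curl B) − ((curl B)·∇)B vanish at every point of ∂Ω. -/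
noncomputable section

open MeasureTheory

/-!
Differentiating along a boundary plane a quantity that vanishes there gives zero. So for an
insulating divergence-free field `B` one has `∂₃B₃ = 0` on the boundary, hence `∂₃∂ᵢB₃ = 0` for
`i = 1, 2`, while `(ΔB)ᵢ = 0` reduces to `∂₃∂₃Bᵢ = 0`. Therefore `curl B` satisfies the Navier-slip
condition. This condition is dual to the insulating one: if `w` is Navier-slip and `B` insulating,
then `(B·∇)w = B₃∂₃w` on the boundary has no tangential part, and `(w·∇)B` only differentiates `B`
along the boundary, so it has none either.
-/

section FDeriv

variable {𝕜 E F : Type*} [NontriviallyNormedField 𝕜] [NormedAddCommGroup E] [NormedSpace 𝕜 E]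
  [NormedAddCommGroup F] [NormedSpace 𝕜 F] {f : E → F} {x : E}

theorem fderiv_apply_eq_zero_of_const_on_line {v : E} (hf : ∀ t : 𝕜, f (x + t • v) = f x) :
    fderiv 𝕜 f x v = 0 := by
  by_cases hd : DifferentiableAt 𝕜 f x
  · rw [← hd.lineDeriv_eq_fderiv, lineDeriv, funext hf, deriv_const]
  · rw [fderiv_zero_of_not_differentiableAt hd, zero_apply]

theorem differentiableAt_fderiv_of_contDiffAt_two (hf : ContDiffAt 𝕜 2 f x) :
    DifferentiableAt 𝕜 (fderiv 𝕜 f) x :=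
  (hf.fderiv_right (m := 1) (by norm_num)).differentiableAt one_ne_zero

theorem fderiv_fderiv_apply_const (hf : DifferentiableAt 𝕜 (fderiv 𝕜 f) x) (v w : E) :
    fderiv 𝕜 (fun y => fderiv 𝕜 f y w) x v = fderiv 𝕜 (fderiv 𝕜 f) x v w := by
  simp [fderiv_clm_apply hf (differentiableAt_const w)]

end FDeriv

section PartialDerivatives

variable {f g : V3 → ℝ} {x : V3}

theorem pd_sub (hf : DifferentiableAt ℝ f x) (hg : DifferentiableAt ℝ g x) (i : Fin 3) :
    pd i (fun y => f y - g y) x = pd i f x - pd i g x := by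
  simp only [pd, fderiv_fun_sub hf hg, sub_apply]

theorem differentiableAt_pd (hf : ContDiffAt ℝ 2 f x) (i : Fin 3) :
    DifferentiableAt ℝ (pd i f) x :=
  (differentiableAt_fderiv_of_contDiffAt_two hf).clm_apply (differentiableAt_const _)

theorem pd_comm (hf : ContDiffAt ℝ 2 f x) (i j : Fin 3) :
    pd i (pd j f) x = pd j (pd i f) x := by
  have pd_pd (k l : Fin 3) :
      pd k (pd l f) x = fderiv ℝ (fderiv ℝ f) x (Pi.single k 1) (Pi.single l 1) :=
    fderiv_fderiv_apply_const (differentiableAt_fderiv_of_contDiffAt_two hf) _ _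
  rw [pd_pd, pd_pd, (hf.isSymmSndFDerivAt (by simp)).eq]

theorem pd_eq_zero_of_eq_zero_on_planes {S : Set ℝ} {i j : Fin 3} (hij : i ≠ j)
    (hf : ∀ y : V3, y j ∈ S → f y = 0) (hx : x j ∈ S) : pd i f x = 0 := by
  refine fderiv_apply_eq_zero_of_const_on_line fun t => ?_
  have coord_eq : (x + t • (Pi.single i 1 : V3)) j = x j := by simp [hij.symm]
  rw [hf _ (coord_eq ▸ hx), hf x hx]

end PartialDerivatives

/-- The insulating boundary condition `V × n = 0`, imposed on the horizontal planes `x₃ = s`,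
`s ∈ S`; the boundary `∂Ω` is the case `S = {0, 1}`. -/
def InsulatingOn (S : Set ℝ) (V : V3 → V3) : Prop :=
  ∀ x, x 2 ∈ S → V x 0 = 0 ∧ V x 1 = 0

/-- The Navier-slip boundary condition `V₃ = ∂₃V₁ = ∂₃V₂ = 0`, imposed on the horizontal planes
`x₃ = s`, `s ∈ S`. -/
def NavierSlipOn (S : Set ℝ) (V : V3 → V3) : Prop :=
  ∀ x, x 2 ∈ S → V x 2 = 0 ∧ pd 2 (fun y => V y 0) x = 0 ∧ pd 2 (fun y => V y 1) x = 0

namespace InsulatingOn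

variable {S : Set ℝ} {B w V W : V3 → V3} {x : V3}

theorem sub (hV : InsulatingOn S V) (hW : InsulatingOn S W) :
    InsulatingOn S (fun x => V x - W x) := fun x hx => by
  simp [hV x hx, hW x hx]

theorem pd_zero_eq_zero (hB : InsulatingOn S B) {i : Fin 3} (hi : i ≠ 2) (hx : x 2 ∈ S) :
    pd i (fun y => B y 0) x = 0 :=
  pd_eq_zero_of_eq_zero_on_planes hi (fun y hy => (hB y hy).1) hx

theorem pd_one_eq_zero (hB : InsulatingOn S B) {i : Fin 3} (hi : i ≠ 2) (hx : x 2 ∈ S) :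
    pd i (fun y => B y 1) x = 0 :=
  pd_eq_zero_of_eq_zero_on_planes hi (fun y hy => (hB y hy).2) hx

theorem vdiv_eq (hB : InsulatingOn S B) (hx : x 2 ∈ S) :
    vdiv B x = pd 2 (fun y => B y 2) x := by
  simp [vdiv, hB.pd_zero_eq_zero _ hx, hB.pd_one_eq_zero _ hx]

theorem vlap_zero_eq (hB : InsulatingOn S B) (hx : x 2 ∈ S) :
    vlap B x 0 = pd 2 (pd 2 fun y => B y 0) x := by
  have pd_pd_eq_zero {i : Fin 3} (hi : i ≠ 2) : pd i (pd i fun y => B y 0) x = 0 :=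
    pd_eq_zero_of_eq_zero_on_planes hi (fun _ hy => hB.pd_zero_eq_zero hi hy) hx
  simp [vlap, lap, pd_pd_eq_zero]

theorem vlap_one_eq (hB : InsulatingOn S B) (hx : x 2 ∈ S) :
    vlap B x 1 = pd 2 (pd 2 fun y => B y 1) x := by
  have pd_pd_eq_zero {i : Fin 3} (hi : i ≠ 2) : pd i (pd i fun y => B y 1) x = 0 :=
    pd_eq_zero_of_eq_zero_on_planes hi (fun _ hy => hB.pd_one_eq_zero hi hy) hx
  simp [vlap, lap, pd_pd_eq_zero]

theorem vcurl_two_eq_zero (hB : InsulatingOn S B) (hx : x 2 ∈ S) : vcurl B x 2 = 0 := by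
  simp [vcurl, hB.pd_zero_eq_zero _ hx, hB.pd_one_eq_zero _ hx]

theorem pd_two_pd_eq_zero (hB : InsulatingOn S B) (hdiv : ∀ x, x 2 ∈ S → vdiv B x = 0)
    (hx : x 2 ∈ S) (hBx : ContDiffAt ℝ 2 (fun y => B y 2) x) {i : Fin 3} (hi : i ≠ 2) :
    pd 2 (pd i fun y => B y 2) x = 0 := by
  rw [pd_comm hBx]
  exact pd_eq_zero_of_eq_zero_on_planes hi (fun y hy => hB.vdiv_eq hy ▸ hdiv y hy) hx

theorem navierSlipOn_vcurl (hB : InsulatingOn S B)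
    (hsmooth : ∀ x, x 2 ∈ S → ContDiffAt ℝ 2 B x) (hdiv : ∀ x, x 2 ∈ S → vdiv B x = 0)
    (hlap : InsulatingOn S (vlap B)) : NavierSlipOn S (vcurl B) := fun x hx => by
  have hsmooth_apply (i : Fin 3) : ContDiffAt ℝ 2 (fun y => B y i) x :=
    contDiffAt_pi.1 (hsmooth x hx) i
  have hdiff (i j : Fin 3) : DifferentiableAt ℝ (pd i fun y => B y j) x :=
    differentiableAt_pd (hsmooth_apply j) i
  have hmixed {i : Fin 3} (hi : i ≠ 2) : pd 2 (pd i fun y => B y 2) x = 0 :=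
    hB.pd_two_pd_eq_zero hdiv hx (hsmooth_apply 2) hi
  refine ⟨hB.vcurl_two_eq_zero hx, ?_, ?_⟩
  · calc pd 2 (fun y => vcurl B y 0) x
        = pd 2 (pd 1 fun y => B y 2) x - pd 2 (pd 2 fun y => B y 1) x :=
          pd_sub (hdiff 1 2) (hdiff 2 1) 2
      _ = 0 := by rw [hmixed (by decide), ← hB.vlap_one_eq hx, (hlap x hx).2, sub_zero]
  · calc pd 2 (fun y => vcurl B y 1) x
        = pd 2 (pd 2 fun y => B y 0) x - pd 2 (pd 0 fun y => B y 2) x :=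
          pd_sub (hdiff 2 0) (hdiff 0 2) 2
      _ = 0 := by rw [hmixed (by decide), ← hB.vlap_zero_eq hx, (hlap x hx).1, sub_zero]

theorem insulatingOn_adv (hB : InsulatingOn S B) (hw : NavierSlipOn S w) :
    InsulatingOn S (adv B w) := fun x hx => by
  simp [adv, hB x hx, hw x hx]

end InsulatingOn

theorem NavierSlipOn.insulatingOn_adv {S : Set ℝ} {w B : V3 → V3} (hw : NavierSlipOn S w)
    (hB : InsulatingOn S B) : InsulatingOn S (adv w B) := fun x hx => by
  simp [adv, hw x hx, hB.pd_zero_eq_zero _ hx, hB.pd_one_eq_zero _ hx]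

theorem stmt_2_general {S : Set ℝ} {B : V3 → V3}
    (hsmooth : ∀ x, x 2 ∈ S → ContDiffAt ℝ 2 B x)
    (hdiv : ∀ x, x 2 ∈ S → vdiv B x = 0)
    (hB : InsulatingOn S B) (hlap : InsulatingOn S (vlap B)) :
    InsulatingOn S (fun x => adv B (vcurl B) x - adv (vcurl B) B x) :=
  have hcurl := hB.navierSlipOn_vcurl hsmooth hdiv hlap
  (hB.insulatingOn_adv hcurl).sub (hcurl.insulatingOn_adv hB)

/-- Lemma 5.2: for divergence-free `B` with the insulating b.c. and `ΔB × n = 0` on `∂Ω`,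
setting `ω_B = curl B`, one has `curl(ω_B × B) × n = ((B·∇)ω_B − (ω_B·∇)B) × n = 0` on `∂Ω`. -/
theorem stmt_2 (B : V3 → V3)
    (hB : ContDiff ℝ (⊤ : ℕ∞) B)
    (hdivB : ∀ x, vdiv B x = 0)
    (hBbc : ∀ x, onBdry x → B x 0 = 0 ∧ B x 1 = 0)
    (hlapB : ∀ x, onBdry x → vlap B x 0 = 0 ∧ vlap B x 1 = 0) :
    ∀ x, onBdry x →
      (adv B (vcurl B) x - adv (vcurl B) B x) 0 = 0 ∧
      (adv B (vcurl B) x - adv (vcurl B) B x) 1 = 0 := by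
  have hsmooth (x : V3) : ContDiffAt ℝ 2 B x := hB.contDiffAt.of_le (by norm_cast)
  exact stmt_2_general (S := {0, 1}) (fun x _ => hsmooth x) (fun x _ => hdivB x) hBbc hlapB
end
end
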